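/- Copy-merging lemma: let Ĝ = (V, d̂) be a semimetric ATSP instance, u ∈ V a fixed vertex, and G' the graph formed by taking N copies of Ĝ and merging the N copies of u into one supervertex U, where arcs inside a copy keep their weight and an arc from a copy of x₁ in one copy to a copy of x₂ in a different copy gets weight d̂(x₁,u) + d̂(u,x₂). Then the minimum Hamiltonian cycle weight in G' equals N times the minimum Hamiltonian cycle weight in Ĝ. -/

import Mathlib

/-- Weight of the Hamiltonian cycle visiting `σ 0, σ 1, …, σ (m-1), σ 0`. -/
def cycleWeight {V : Type*} (m : ℕ) (d : V → V → ℕ) (σ : Fin m → V) : ℕ :=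
  ∑ i : Fin m, d (σ i) (σ ⟨((i : ℕ) + 1) % m, Nat.mod_lt _ i.pos⟩)

/-- Vertex set of the copy-merging construction: `inl ()` is the supervertex
`U`, and `inr (x, i)` is the copy of `x ≠ u` in the `i`-th copy of `Ĝ`. -/
abbrev MergedV (n N : ℕ) (u : Fin n) := Unit ⊕ ({x : Fin n // x ≠ u} × Fin N)

/-- Arc weights of the copy-merging construction. -/
def mergedD {n N : ℕ} (d : Fin n → Fin n → ℕ) (u : Fin n) :
    MergedV n N u → MergedV n N u → ℕ
  | Sum.inl _, Sum.inl _ => 0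
  | Sum.inl _, Sum.inr y => d u y.1.1
  | Sum.inr x, Sum.inl _ => d x.1.1 u
  | Sum.inr x, Sum.inr y => if x.2 = y.2 then d x.1.1 y.1.1
      else d x.1.1 u + d u y.1.1

/-- Weight of the path from `a` through the list, ending in `e`. -/
def pw {V : Type*} (d : V → V → ℕ) (e : V) : V → List V → ℕ
  | a, [] => d a e
  | a, b :: l => d a b + pw d e b l

/-- `l` lists every vertex other than `u` exactly once. -/
def GoodList {V : Type*} (u : V) (l : List V) : Prop :=
  l.Nodup ∧ ∀ x, x ∈ l ↔ x ≠ u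

theorem pw_ofFn {V : Type*} (d : V → V → ℕ) (e : V) (k : ℕ) (σ : Fin (k + 1) → V) :
    pw d e (σ 0) (List.ofFn (fun i : Fin k => σ i.succ)) =
      ∑ i : Fin k, d (σ i.castSucc) (σ i.succ) + d (σ (Fin.last k)) e := by
  induction k with
  | zero => simp [pw]
  | succ k ih =>
    rw [List.ofFn_succ, pw, Fin.sum_univ_succ]
    have h := ih (fun i => σ i.succ)
    simp only [Fin.succ_last] at h
    rw [h]
    exact (add_assoc _ _ _).symm

theorem cycleWeight_succ {V : Type*} (d : V → V → ℕ) (k : ℕ) (σ : Fin (k + 1) → V) :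
    cycleWeight (k + 1) d σ = ∑ i, d (σ i) (σ (i + 1)) := by
  unfold cycleWeight
  refine Finset.sum_congr rfl fun i _ => ?_
  congr 2
  ext
  simp [Fin.val_add]

theorem cycleWeight_eq_pw {V : Type*} (d : V → V → ℕ) (k : ℕ) (σ : Fin (k + 1) → V) :
    cycleWeight (k + 1) d σ =
      pw d (σ 0) (σ 0) (List.ofFn (fun i : Fin k => σ i.succ)) := by
  rw [pw_ofFn, cycleWeight_succ, Fin.sum_univ_castSucc]
  simp

theorem bridge {V : Type*} [Fintype V] [DecidableEq V] (d : V → V → ℕ) (u : V) (k : ℕ)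
    (hk : Fintype.card V = k + 1) :
    {c | ∃ σ : Fin (k + 1) ≃ V, c = cycleWeight (k + 1) d σ} =
      {c | ∃ l, GoodList u l ∧ c = pw d u u l} := by
  ext c
  constructor
  · rintro ⟨σ, rfl⟩
    let τ : Fin (k + 1) ≃ V := (Equiv.addRight (σ.symm u)).trans σ
    have h0 : τ 0 = u := by simp [τ]
    have hw : cycleWeight (k + 1) d σ = cycleWeight (k + 1) d τ := by
      rw [cycleWeight_succ, cycleWeight_succ,
        ← Equiv.sum_comp (Equiv.addRight (σ.symm u))]
      refine Finset.sum_congr rfl fun i _ => ?_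
      simp [τ, add_right_comm]
    refine ⟨List.ofFn (fun i : Fin k => τ i.succ), ⟨?_, ?_⟩, ?_⟩
    · rw [List.nodup_ofFn]
      exact τ.injective.comp (Fin.succ_injective k)
    · intro x
      rw [List.mem_ofFn]
      constructor
      · rintro ⟨i, rfl⟩ h
        rw [← h0] at h
        exact Fin.succ_ne_zero i (τ.injective h)
      · intro hx
        obtain ⟨j, rfl⟩ := τ.surjective x
        have hj : j ≠ 0 := by rintro rfl; exact hx h0
        obtain ⟨i, rfl⟩ := Fin.exists_succ_eq.2 hj
        exact ⟨i, rfl⟩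
    · rw [hw, cycleWeight_eq_pw, h0]
  · rintro ⟨l, ⟨hnd, hm⟩, rfl⟩
    have hnd' : (u :: l).Nodup := by
      rw [List.nodup_cons]
      exact ⟨fun h => (hm u).1 h rfl, hnd⟩
    have hall : ∀ x, x ∈ u :: l := by
      intro x
      by_cases h : x = u
      · simp [h]
      · exact List.mem_cons_of_mem _ ((hm x).2 h)
    let e := hnd'.getEquivOfForallMemList (u :: l) hall
    have hc : l.length + 1 = k + 1 := by
      rw [← hk, ← Fintype.card_congr e]; simp
    obtain rfl : l.length = k := by omega
    refine ⟨e, ?_⟩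
    rw [cycleWeight_eq_pw]
    have h1 : List.ofFn (fun i : Fin l.length => e i.succ) = l := by
      conv_rhs => rw [← List.ofFn_get l]
      rfl
    rw [h1]
    rfl

theorem pw_append {V : Type*} (D : V → V → ℕ) (U : V)
    (h : ∀ a b, D a b ≤ D a U + D U b) (e : V) (l₁ l₂ : List V) (a : V) :
    pw D e a (l₁ ++ l₂) ≤ pw D U a l₁ + pw D e U l₂ := by
  induction l₁ generalizing a with
  | nil =>
    cases l₂ with
    | nil => exact h a e
    | cons b l => simp only [List.nil_append, pw]; have := h a b; omega
  | cons b l ih => simp only [List.cons_append, pw]; have := ih b; omega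

theorem pw_filter {V : Type*} (d : V → V → ℕ) (e : V)
    (h : ∀ x y z, d x z ≤ d x y + d y z) (p : V → Bool) (l : List V) (a : V) :
    pw d e a (l.filter p) ≤ pw d e a l := by
  induction l generalizing a with
  | nil => exact le_rfl
  | cons b l ih =>
    have hb := ih b
    by_cases hp : p b
    · simp only [List.filter_cons, hp, if_true, pw]; omega
    · simp only [List.filter_cons, hp, pw]
      refine le_trans ?_ (Nat.add_le_add_left hb _)
      cases l.filter p with
      | nil => exact h a b e
      | cons c l' => have := h a b c; simp [pw]; omega

theorem pw_map {V W : Type*} (d : V → V → ℕ) (D : W → W → ℕ) (f : V → W) (e a : V)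
    (l : List V) (h : ∀ x y, D (f x) (f y) = d x y) :
    pw D (f e) (f a) (l.map f) = pw d e a l := by
  induction l generalizing a with
  | nil => exact h a e
  | cons b l ih => simp only [List.map_cons, pw, ih, h]

/-- projection to the `k`-th copy, other copies collapse to `u`. -/
def proj {n N : ℕ} (u : Fin n) (k : Fin N) : MergedV n N u → Fin n
  | Sum.inl _ => u
  | Sum.inr x => if x.2 = k then x.1.1 else u

/-- inclusion of the `k`-th copy. -/
def incl {n N : ℕ} (u : Fin n) (k : Fin N) (x : Fin n) : MergedV n N u :=
  if h : x = u then Sum.inl () else Sum.inr (⟨x, h⟩, k)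

theorem mergedD_incl {n N : ℕ} (d : Fin n → Fin n → ℕ) (u : Fin n) (hu : d u u = 0)
    (k : Fin N) (x y : Fin n) : mergedD d u (incl u k x) (incl u k y) = d x y := by
  unfold incl
  split_ifs with h1 h2 h2 <;> simp [mergedD, *]

theorem mergedD_eq_sum {n N : ℕ} (d : Fin n → Fin n → ℕ) (u : Fin n) (hu : d u u = 0)
    (a b : MergedV n N u) : mergedD d u a b = ∑ k, d (proj u k a) (proj u k b) := by
  rcases a with a | ⟨x, i⟩ <;> rcases b with b | ⟨y, j⟩
  · simp [mergedD, proj, hu]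
  · simp only [mergedD, proj]
    rw [Finset.sum_eq_single j] <;> simp +contextual [hu, eq_comm]
  · simp only [mergedD, proj]
    rw [Finset.sum_eq_single i] <;> simp +contextual [hu, eq_comm]
  · simp only [mergedD, proj]
    split_ifs with h
    · subst h
      rw [Finset.sum_eq_single i] <;> simp +contextual [hu, eq_comm]
    · have : ∀ k, d (if i = k then x.1 else u) (if j = k then y.1 else u) =
          (if i = k then d x.1 u else 0) + (if j = k then d u y.1 else 0) := by
        intro k
        split_ifs with h1 h2 h2
        · exact absurd (h1.trans h2.symm) h
        all_goals simp [hu]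
      simp [this, Finset.sum_add_distrib]

theorem pw_merged {n N : ℕ} (d : Fin n → Fin n → ℕ) (u : Fin n) (hu : d u u = 0)
    (e a : MergedV n N u) (L : List (MergedV n N u)) :
    pw (mergedD d u) e a L = ∑ k, pw d (proj u k e) (proj u k a) (L.map (proj u k)) := by
  induction L generalizing a with
  | nil => exact mergedD_eq_sum d u hu a e
  | cons b L ih =>
    simp only [List.map_cons, pw, ih, Finset.sum_add_distrib, mergedD_eq_sum d u hu a b]

theorem good_proj {n N : ℕ} (u : Fin n) (k : Fin N) (L : List (MergedV n N u))
    (hL : GoodList (Sum.inl ()) L) :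
    GoodList u ((L.map (proj u k)).filter (fun x => decide (x ≠ u))) := by
  have key : ∀ a : MergedV n N u, proj u k a ≠ u → a = incl u k (proj u k a) := by
    rintro (a | ⟨⟨x, hx⟩, i⟩) h
    · exact absurd rfl h
    · by_cases hi : i = k
      · subst hi; simp [proj, incl, hx]
      · simp [proj, hi] at h
  constructor
  · rw [List.filter_map]
    refine List.Nodup.map_on ?_ (hL.1.filter _)
    intro a ha b hb hab
    simp only [List.mem_filter, Function.comp, decide_eq_true_eq] at ha hb
    rw [key a ha.2, key b hb.2, hab]
  · intro x
    simp only [List.mem_filter, List.mem_map, decide_eq_true_eq]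
    refine ⟨fun h => h.2, fun hx => ⟨⟨Sum.inr (⟨x, hx⟩, k), (hL.2 _).2 (by simp), ?_⟩, hx⟩⟩
    simp [proj]

theorem good_flat {n N : ℕ} (u : Fin n) (l : List (Fin n)) (hl : GoodList u l) :
    GoodList (Sum.inl () : MergedV n N u)
      ((List.finRange N).flatMap (fun k => l.map (incl u k))) := by
  have hi : ∀ (k : Fin N) x, x ∈ l → ∃ h : x ≠ u, incl u k x = Sum.inr (⟨x, h⟩, k) := by
    intro k x hx
    have h := (hl.2 x).1 hx
    exact ⟨h, by simp [incl, h]⟩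
  constructor
  · rw [List.nodup_flatMap]
    constructor
    · intro k _
      refine List.Nodup.map_on ?_ hl.1
      intro x hx y hy hxy
      obtain ⟨_, h1⟩ := hi k x hx
      obtain ⟨_, h2⟩ := hi k y hy
      rw [h1, h2] at hxy
      simpa using hxy
    · refine (List.nodup_finRange N).imp ?_
      intro i j hij
      simp only [Function.onFun]
      intro a ha hb
      obtain ⟨x, hx, rfl⟩ := List.mem_map.1 ha
      obtain ⟨y, hy, hxy⟩ := List.mem_map.1 hb
      obtain ⟨_, h1⟩ := hi i x hx
      obtain ⟨_, h2⟩ := hi j y hy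
      rw [h1, h2] at hxy
      simp at hxy
      exact hij hxy.2.symm
  · intro a
    simp only [List.mem_flatMap, List.mem_map, List.mem_finRange, true_and]
    constructor
    · rintro ⟨k, x, hx, rfl⟩
      obtain ⟨_, h1⟩ := hi k x hx
      simp [h1]
    · rcases a with a | ⟨⟨x, hx⟩, k⟩
      · intro h; exact absurd rfl h
      · intro _
        exact ⟨k, x, (hl.2 x).2 hx, by simp [incl, hx]⟩

theorem pw_flat {n N : ℕ} (d : Fin n → Fin n → ℕ) (u : Fin n) (hu : d u u = 0)
    (htri : ∀ x y z, d x z ≤ d x y + d y z) (l : List (Fin n)) (I : List (Fin N)) :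
    pw (mergedD d u) (Sum.inl ()) (Sum.inl ()) (I.flatMap (fun k => l.map (incl u k))) ≤
      I.length * pw d u u l := by
  induction I with
  | nil => simp [pw, mergedD]
  | cons k I ih =>
    rw [List.flatMap_cons, List.length_cons, add_mul, one_mul, add_comm]
    have hU : incl u k u = (Sum.inl () : MergedV n N u) := by simp [incl]
    have h1 := pw_map d (mergedD d u) (incl u k) u u l (mergedD_incl d u hu k)
    rw [hU] at h1
    refine (pw_append (mergedD d u) (Sum.inl ()) ?_ _ _ _ _).trans (Nat.add_le_add h1.le ih)
    intro a b
    simp only [mergedD_eq_sum d u hu, ← Finset.sum_add_distrib]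
    exact Finset.sum_le_sum fun i _ => htri _ _ _

theorem sInf_good_le {V : Type*} (d : V → V → ℕ) {u : V} {l : List V} (hl : GoodList u l) :
    sInf {c | ∃ l, GoodList u l ∧ c = pw d u u l} ≤ pw d u u l :=
  Nat.sInf_le ⟨l, hl, rfl⟩

/-- copy-merging lemma: the minimum Hamiltonian cycle weight in
the merged graph `G'` made of `N` copies of `Ĝ` glued at `u` equals `N` times
the minimum Hamiltonian cycle weight in `Ĝ`. -/
theorem copy_merging (n N : ℕ) (hn : 0 < n) (hN : 0 < N)
    (d : Fin n → Fin n → ℕ) (u : Fin n)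
    (hself : ∀ x, d x x = 0)
    (htri : ∀ x y z, d x z ≤ d x y + d y z) :
    sInf {c | ∃ σ : Fin ((n - 1) * N + 1) ≃ MergedV n N u,
        c = cycleWeight ((n - 1) * N + 1) (mergedD d u) σ} =
      N * sInf {c | ∃ σ : Fin n ≃ Fin n, c = cycleWeight n d σ} := by
  obtain ⟨m, rfl⟩ : ∃ m, n = m + 1 := ⟨n - 1, by omega⟩
  rw [bridge d u m (by simp), bridge (mergedD d u) (Sum.inl ()) ((m + 1 - 1) * N)
    (by simp [Fintype.card_subtype_compl, add_comm])]
  have hne : {c | ∃ l, GoodList u l ∧ c = pw d u u l}.Nonempty := by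
    rw [← bridge d u m (by simp)]
    exact ⟨_, Equiv.refl _, rfl⟩
  apply le_antisymm
  · obtain ⟨l, hl, hc⟩ := Nat.sInf_mem hne
    rw [hc]
    refine (sInf_good_le _ (good_flat u l hl)).trans ?_
    have := pw_flat d u (hself u) htri l (List.finRange N)
    rwa [List.length_finRange] at this
  · have hne' : {c | ∃ l, GoodList (Sum.inl () : MergedV (m + 1) N u) l ∧
        c = pw (mergedD d u) (Sum.inl ()) (Sum.inl ()) l}.Nonempty := by
      obtain ⟨_, l, hl, _⟩ := hne
      exact ⟨_, _, good_flat u l hl, rfl⟩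
    obtain ⟨L, hL, hc⟩ := Nat.sInf_mem hne'
    rw [hc, pw_merged d u (hself u)]
    have : ∀ k ∈ (Finset.univ : Finset (Fin N)),
        sInf {c | ∃ l, GoodList u l ∧ c = pw d u u l} ≤
        pw d (proj u k (Sum.inl ())) (proj u k (Sum.inl ())) (L.map (proj u k)) := by
      intro k _
      exact (sInf_good_le _ (good_proj u k L hL)).trans (pw_filter d u htri _ _ _)
    have h := Finset.card_nsmul_le_sum _ _ _ this
    simpa using h
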